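/- Suppose the LP relaxation of maximum weight matching on G is pointed, i.e. it has a unique half-integral optimum x* whose weight exceeds that of every other half-integral feasible point by some ε > 0. Let (α, m, γ) be a fixed point of the natural dynamics. Then γ is an optimal solution of the dual LP of maximum weight matching: γ is dual feasible and Σ_{i∈V} γ_i equals the minimum value of the dual LP (equivalently, Σ_{i∈V} γ_i = Σ_{e∈E} w_e x*_e). -/

import Mathlib

open Finset Filter Topology

/-- The offer `m_{i→j}` computed from message vector `α`:
`m_{i→j} = (w_{ij} − α_{i→j})₊ − (1/2)(w_{ij} − α_{i→j} − α_{j→i})₊`. -/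
noncomputable def offer {V : Type*} (w α : V → V → ℝ) (i j : V) : ℝ :=
  max (w i j - α i j) 0 - (1 / 2) * max (w i j - α i j - α j i) 0

/-- `max_{k ∈ ∂i ∖ {j}} m_{k→i}` (max over the empty set is 0). -/
noncomputable def bestAlt {V : Type*} [Fintype V] [DecidableEq V]
    (Adj : V → V → Prop) [DecidableRel Adj] (w α : V → V → ℝ) (i j : V) : ℝ :=
  (Finset.univ.filter fun k => Adj i k ∧ k ≠ j).fold max 0 fun k => offer w α k i

/-- Earnings `γ_i = max_{k ∈ ∂i} m_{k→i}` (max over the empty set is 0). -/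
noncomputable def earn {V : Type*} [Fintype V]
    (Adj : V → V → Prop) [DecidableRel Adj] (w α : V → V → ℝ) (i : V) : ℝ :=
  (Finset.univ.filter fun k => Adj i k).fold max 0 fun k => offer w α k i

/-- One step of the natural dynamics with damping factor `κ`:
`α'_{i→j} = κ · max_{k∈∂i∖{j}} m_{k→i} + (1−κ) · α_{i→j}`. -/
noncomputable def step {V : Type*} [Fintype V] [DecidableEq V]
    (Adj : V → V → Prop) [DecidableRel Adj] (w : V → V → ℝ) (κ : ℝ)
    (α : V → V → ℝ) : V → V → ℝ :=
  fun i j => κ * bestAlt Adj w α i j + (1 - κ) * α i j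

/-- A fixed point of the natural dynamics: the message vector is unchanged by the update. -/
def IsFixedPoint {V : Type*} [Fintype V] [DecidableEq V]
    (Adj : V → V → Prop) [DecidableRel Adj] (w : V → V → ℝ) (κ : ℝ)
    (α : V → V → ℝ) : Prop :=
  ∀ i j, Adj i j → step Adj w κ α i j = α i j

/-- `W`, the maximum edge weight. -/
noncomputable def maxW {V : Type*} [Fintype V]
    (Adj : V → V → Prop) [DecidableRel Adj] (w : V → V → ℝ) : ℝ :=
  ((Finset.univ ×ˢ Finset.univ).filter fun p : V × V => Adj p.1 p.2).fold max 0
    fun p => w p.1 p.2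

/-- A valid message vector: `α ∈ [0, W]^{2|E|}`. -/
def ValidMsg {V : Type*} [Fintype V]
    (Adj : V → V → Prop) [DecidableRel Adj] (w : V → V → ℝ) (α : V → V → ℝ) : Prop :=
  ∀ i j, Adj i j → α i j ∈ Set.Icc (0 : ℝ) (maxW Adj w)

/-- `G = (V, E)` is a finite simple graph with symmetric positive edge weights. -/
def GoodGraph {V : Type*} (Adj : V → V → Prop) (w : V → V → ℝ) : Prop :=
  (∀ i j, Adj i j → Adj j i) ∧ (∀ i, ¬Adj i i) ∧ (∀ i j, w i j = w j i) ∧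
  (∀ i j, Adj i j → 0 < w i j)

/-- Feasibility for the LP relaxation of maximum weight matching:
`x` symmetric, `x_{ij} ≥ 0` on edges, and `∑_{j∈∂i} x_{ij} ≤ 1` at every node. -/
def LPFeasible {V : Type*} [Fintype V]
    (Adj : V → V → Prop) [DecidableRel Adj] (x : V → V → ℝ) : Prop :=
  (∀ i j, x i j = x j i) ∧ (∀ i j, Adj i j → 0 ≤ x i j) ∧
  (∀ i, ∑ j ∈ Finset.univ.filter (fun j => Adj i j), x i j ≤ 1)

/-- The LP objective `∑_{(i,j)∈E} w_{ij} x_{ij}` (each undirected edge counted once,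
i.e. half the sum over ordered pairs). -/
noncomputable def LPobj {V : Type*} [Fintype V]
    (Adj : V → V → Prop) [DecidableRel Adj] (w x : V → V → ℝ) : ℝ :=
  (1 / 2) * ∑ p ∈ (Finset.univ ×ˢ Finset.univ).filter (fun p : V × V => Adj p.1 p.2),
    w p.1 p.2 * x p.1 p.2

/-!
A fixed point satisfies `γ i + γ j = max (w i j) (α i j + α j i)` on every edge, so `γ` is dual
feasible and an edge is tight iff `α i j + α j i ≤ w i j`. If the inequality is strict the edge is a
component of the graph of tight edges; if it is an equality and `γ i ≠ 0`, the best alternative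
offer to `i` equals `γ i` and comes along a second tight edge. Hence every node with `γ i ≠ 0` lies
on an isolated tight edge or on two tight edges.

To deduce complementary slackness with the unique optimum `x`, compare `γ` with a strictly
complementary dual optimum `y`. Set aside the nodes matched by `x` along an isolated tight edge; let
`t > 0` be the largest value of `|γ i - y i|` on the other nodes. Tight edges lead from nodes of
discrepancy `t` to nodes of discrepancy `-t`, support edges of `x` lead back, and a node of
discrepancy `t` has two tight edges, on which `x` must be `1 / 2`. The two classes of nodes form a
bipartite union of components of the support of `x`. But a unique optimum is integral on such a
part: by Birkhoff's theorem it is the symmetrization of a partial permutation, whose arcs can be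
shifted from one class towards the other in both directions.
-/

section Objective

variable {V : Type*} [Fintype V] (Adj : V → V → Prop) [DecidableRel Adj]

theorem LPobj_eq_sum (w x : V → V → ℝ) :
    LPobj Adj w x = (1 / 2) * ∑ i, ∑ j with Adj i j, w i j * x i j := by
  simp only [LPobj, sum_filter, sum_product]

/-- The objective of the LP as a bilinear form in the weights and the edge variables. -/
noncomputable def LPobjBilin : (V → V → ℝ) →ₗ[ℝ] (V → V → ℝ) →ₗ[ℝ] ℝ :=
  LinearMap.mk₂ ℝ (LPobj Adj)
    (fun _ _ _ => by simp only [LPobj, Pi.add_apply, add_mul, sum_add_distrib, mul_add])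
    (fun _ _ _ => by
      simp only [LPobj, Pi.smul_apply, smul_eq_mul, mul_assoc, ← mul_sum, mul_left_comm])
    (fun _ _ _ => by simp only [LPobj, Pi.add_apply, mul_add, sum_add_distrib])
    (fun c _ _ => by
      simp only [LPobj, Pi.smul_apply, smul_eq_mul, mul_left_comm _ c, ← mul_sum])

@[simp]
theorem LPobjBilin_apply (w x : V → V → ℝ) : LPobjBilin Adj w x = LPobj Adj w x := rfl

variable {Adj}

theorem LPobj_congr {w w' x x' : V → V → ℝ}
    (h : ∀ i j, Adj i j → w i j * x i j = w' i j * x' i j) :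
    LPobj Adj w x = LPobj Adj w' x' := by
  unfold LPobj
  congr 1
  exact sum_congr rfl fun p hp => h p.1 p.2 (mem_filter.1 hp).2

theorem LPobj_nonneg {w x : V → V → ℝ} (h : ∀ i j, Adj i j → 0 ≤ w i j * x i j) :
    0 ≤ LPobj Adj w x :=
  mul_nonneg (by norm_num) (sum_nonneg fun p hp => h p.1 p.2 (mem_filter.1 hp).2)

theorem LPobj_eq_zero_iff {w x : V → V → ℝ} (h : ∀ i j, Adj i j → 0 ≤ w i j * x i j) :
    LPobj Adj w x = 0 ↔ ∀ i j, Adj i j → w i j * x i j = 0 := by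
  unfold LPobj
  rw [mul_eq_zero_iff_left (by norm_num),
    sum_eq_zero_iff_of_nonneg fun p hp => h p.1 p.2 (mem_filter.1 hp).2]
  simp [Prod.forall]

variable (Adj)

/-- The total fractional degree `∑_{j ∈ ∂i} x_{ij}` of the node `i`, which the LP constrains to be
at most `1`. -/
noncomputable def load (x : V → V → ℝ) (i : V) : ℝ := ∑ j with Adj i j, x i j

variable {Adj}

theorem LPFeasible.load_le_one {x : V → V → ℝ} (hx : LPFeasible Adj x) (i : V) :
    load Adj x i ≤ 1 :=
  hx.2.2 i

theorem LPFeasible.sum_le_one {x : V → V → ℝ} (hx : LPFeasible Adj x) {i : V} {s : Finset V}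
    (hs : ∀ j ∈ s, Adj i j) : ∑ j ∈ s, x i j ≤ 1 :=
  (sum_le_sum_of_subset_of_nonneg (fun j hj => mem_filter.2 ⟨mem_univ j, hs j hj⟩)
    fun j hj _ => hx.2.1 i j (mem_filter.1 hj).2).trans (hx.load_le_one i)

theorem LPFeasible.le_one {x : V → V → ℝ} (hx : LPFeasible Adj x) {i j : V} (hij : Adj i j) :
    x i j ≤ 1 := by
  simpa using hx.sum_le_one (s := {j}) (by simpa using hij)

theorem LPFeasible.add_le_one {x : V → V → ℝ} (hx : LPFeasible Adj x) {i j k : V}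
    (hij : Adj i j) (hik : Adj i k) (hjk : j ≠ k) : x i j + x i k ≤ 1 := by
  classical
  rw [← sum_pair (f := x i) hjk]
  exact hx.sum_le_one (by simp [hij, hik])

theorem LPFeasible.eq_zero_of_eq_one {x : V → V → ℝ} (hx : LPFeasible Adj x) {i j k : V}
    (hij : Adj i j) (hik : Adj i k) (hjk : j ≠ k) (hone : x i j = 1) : x i k = 0 :=
  (by linarith [hx.add_le_one hij hik hjk] : x i k ≤ 0).antisymm (hx.2.1 i k hik)

theorem LPFeasible.load_eq_one_of_eq_one {x : V → V → ℝ} (hx : LPFeasible Adj x) {i j : V}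
    (hij : Adj i j) (hone : x i j = 1) : load Adj x i = 1 :=
  (hx.load_le_one i).antisymm <| hone ▸
    single_le_sum (f := x i) (fun k hk => hx.2.1 i k (mem_filter.1 hk).2)
      (mem_filter.2 ⟨mem_univ j, hij⟩)

theorem sum_mul_load (hAdj : ∀ i j, Adj i j → Adj j i) (y : V → ℝ) {x : V → V → ℝ}
    (hx : ∀ i j, x i j = x j i) :
    ∑ i, y i * load Adj x i = LPobj Adj (fun i j => y i + y j) x := by
  have hswap : ∑ i, ∑ j with Adj i j, y j * x i j = ∑ i, ∑ j with Adj i j, y i * x i j := by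
    simp only [sum_filter]
    rw [sum_comm]
    refine sum_congr rfl fun i _ => sum_congr rfl fun j _ => ?_
    rw [hx j i]
    exact if_congr ⟨hAdj j i, hAdj i j⟩ rfl rfl
  simp only [LPobj_eq_sum, load, add_mul, sum_add_distrib, hswap, mul_sum _ (x _)]
  ring

end Objective

section Duality

variable {V : Type*} (Adj : V → V → Prop)

/-- Feasibility for the dual LP: a nonnegative fractional vertex cover of the weights. -/
structure DualFeasible (w : V → V → ℝ) (y : V → ℝ) : Prop where
  nonneg : ∀ i, 0 ≤ y i
  cover : ∀ i j, Adj i j → w i j ≤ y i + y j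

variable [Fintype V] [DecidableRel Adj]

/-- Complementary slackness between a dual vector `y` and a primal vector `x`. -/
structure ComplementarySlack (w : V → V → ℝ) (y : V → ℝ) (x : V → V → ℝ) : Prop where
  load_eq_one : ∀ i, y i ≠ 0 → load Adj x i = 1
  add_eq_weight : ∀ i j, Adj i j → x i j ≠ 0 → y i + y j = w i j

variable {Adj} {w x : V → V → ℝ} {y : V → ℝ}

theorem sum_sub_LPobj (hAdj : ∀ i j, Adj i j → Adj j i) (w : V → V → ℝ) (y : V → ℝ)
    (hx : ∀ i j, x i j = x j i) :
    ∑ i, y i - LPobj Adj w x =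
      ∑ i, y i * (1 - load Adj x i) + LPobj Adj (fun i j => y i + y j - w i j) x := by
  have hsub : LPobj Adj (fun i j => y i + y j - w i j) x =
      LPobj Adj (fun i j => y i + y j) x - LPobj Adj w x :=
    LinearMap.map_sub₂ (LPobjBilin Adj) (fun i j => y i + y j) w x
  simp only [mul_sub, mul_one, sum_sub_distrib, sum_mul_load hAdj y hx, hsub]
  ring

theorem DualFeasible.mul_one_sub_load_nonneg (hy : DualFeasible Adj w y) (hx : LPFeasible Adj x)
    (i : V) : 0 ≤ y i * (1 - load Adj x i) :=
  mul_nonneg (hy.nonneg i) (sub_nonneg.2 (hx.load_le_one i))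

theorem DualFeasible.slack_mul_nonneg (hy : DualFeasible Adj w y) (hx : LPFeasible Adj x)
    (i j : V) (hij : Adj i j) : 0 ≤ (y i + y j - w i j) * x i j :=
  mul_nonneg (sub_nonneg.2 (hy.cover i j hij)) (hx.2.1 i j hij)

theorem DualFeasible.LPobj_le_sum (hAdj : ∀ i j, Adj i j → Adj j i) (hy : DualFeasible Adj w y)
    (hx : LPFeasible Adj x) : LPobj Adj w x ≤ ∑ i, y i := by
  rw [← sub_nonneg, sum_sub_LPobj hAdj w y hx.1]
  exact add_nonneg (sum_nonneg fun i _ => hy.mul_one_sub_load_nonneg hx i)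
    (LPobj_nonneg (hy.slack_mul_nonneg hx))

theorem DualFeasible.sum_eq_LPobj_iff (hAdj : ∀ i j, Adj i j → Adj j i)
    (hy : DualFeasible Adj w y) (hx : LPFeasible Adj x) :
    ∑ i, y i = LPobj Adj w x ↔ ComplementarySlack Adj w y x := by
  rw [← sub_eq_zero, sum_sub_LPobj hAdj w y hx.1,
    add_eq_zero_iff_of_nonneg (sum_nonneg fun i _ => hy.mul_one_sub_load_nonneg hx i)
      (LPobj_nonneg (hy.slack_mul_nonneg hx)),
    sum_eq_zero_iff_of_nonneg fun i _ => hy.mul_one_sub_load_nonneg hx i,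
    LPobj_eq_zero_iff (hy.slack_mul_nonneg hx)]
  simp only [mem_univ, true_imp_iff, mul_eq_zero, sub_eq_zero, or_iff_not_imp_left]
  exact ⟨fun ⟨hload, hedge⟩ => ⟨fun i hi => (hload i hi).symm,
      fun i j hij hxij => not_imp_comm.1 (hedge i j hij) hxij⟩,
    fun h => ⟨fun i hi => (h.load_eq_one i hi).symm,
      fun i j hij hne => not_imp_comm.1 (h.add_eq_weight i j hij) hne⟩⟩

end Duality

section StrongDuality

variable {V : Type*}

/-- The symmetric edge vectors with entries in `[0, 2]`. The bound `2`, rather than `1`, lets a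
saddle point of the Lagrangian over this box show that all edges are covered. -/
def symmetricBox (V : Type*) : Set (V → V → ℝ) :=
  Set.Icc 0 2 ∩ {x | ∀ i j, x i j = x j i}

theorem convex_symmetricBox : Convex ℝ (symmetricBox V) :=
  (convex_Icc 0 2).inter fun x hx z hz a b _ _ _ i j => by
    simp only [Pi.add_apply, Pi.smul_apply, hx i j, hz i j]

theorem isCompact_symmetricBox : IsCompact (symmetricBox V) := by
  refine isCompact_Icc.inter_right ?_
  simp only [Set.ofPred_forall]
  exact isClosed_iInter fun i => isClosed_iInter fun j =>
    isClosed_eq (by fun_prop) (by fun_prop)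

theorem zero_mem_symmetricBox : (0 : V → V → ℝ) ∈ symmetricBox V :=
  ⟨⟨le_rfl, fun _ _ => zero_le_two⟩, fun _ _ => rfl⟩

variable [Fintype V] (Adj : V → V → Prop) [DecidableRel Adj]

/-- The Lagrangian of the matching LP, with multipliers `y` for the degree constraints. -/
noncomputable def lagrangian (w : V → V → ℝ) (y : V → ℝ) (x : V → V → ℝ) : ℝ :=
  ∑ i, y i + LPobj Adj (fun i j => w i j - (y i + y j)) x

variable {Adj} {w x : V → V → ℝ} {y : V → ℝ}

theorem lagrangian_eq (hAdj : ∀ i j, Adj i j → Adj j i) (w : V → V → ℝ) (y : V → ℝ)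
    (hx : ∀ i j, x i j = x j i) :
    lagrangian Adj w y x = ∑ i, y i * (1 - load Adj x i) + LPobj Adj w x := by
  have hneg : LPobj Adj (fun i j => w i j - (y i + y j)) x =
      -LPobj Adj (fun i j => y i + y j - w i j) x := by
    simp only [LPobj, ← neg_sub (w _ _), neg_mul, sum_neg_distrib, mul_neg, neg_neg]
  rw [lagrangian, hneg]
  linarith [sum_sub_LPobj hAdj w y hx]

theorem exists_isSaddlePointOn_lagrangian (hAdj : ∀ i j, Adj i j → Adj j i) (w : V → V → ℝ)
    {M : ℝ} (hM : 0 ≤ M) :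
    ∃ y ∈ Set.Icc 0 (fun _ : V => M), ∃ x ∈ symmetricBox V,
      IsSaddlePointOn (Set.Icc 0 fun _ => M) (symmetricBox V) (lagrangian Adj w) y x := by
  refine Sion.exists_isSaddlePointOn (Set.nonempty_Icc.2 fun _ => hM) (convex_Icc 0 _)
    isCompact_Icc (fun x _ => ?_) (fun x hx => ?_) convex_symmetricBox
    ⟨0, zero_mem_symmetricBox⟩ isCompact_symmetricBox (fun y _ => ?_) (fun y _ => ?_)
  · refine ContinuousOn.lowerSemicontinuousOn (Continuous.continuousOn ?_)
    unfold lagrangian LPobj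
    fun_prop
  · simp only [lagrangian_eq hAdj w _ hx.2]
    exact (((Fintype.linearCombination ℝ fun i => 1 - load Adj x i).convexOn
      (convex_Icc 0 _)).add_const _).quasiconvexOn
  · refine ContinuousOn.upperSemicontinuousOn (Continuous.continuousOn ?_)
    unfold lagrangian LPobj
    fun_prop
  · exact ((concaveOn_const (∑ i, y i) convex_symmetricBox).add
      ((LPobjBilin Adj fun i j => w i j - (y i + y j)).concaveOn
        convex_symmetricBox)).quasiconcaveOn

theorem edge_eq_of_isMaxOn_lagrangian (hw : ∀ i j, w i j = w j i) (hx : x ∈ symmetricBox V)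
    (hmax : IsMaxOn (lagrangian Adj w y) (symmetricBox V) x) {i j : V} (hij : Adj i j) :
    (y i + y j < w i j → x i j = 2) ∧ (w i j < y i + y j → x i j = 0) := by
  let r : V → V → ℝ := fun i j => w i j - (y i + y j)
  let z : V → V → ℝ := fun i j => if 0 < r i j then 2 else 0
  have hr : ∀ i j, r i j = r j i := fun i j => by simp only [r, hw i j, add_comm]
  have hz : z ∈ symmetricBox V := by
    refine ⟨⟨fun i j => ?_, fun i j => ?_⟩, fun i j => by simp only [z, hr i j]⟩ <;>
      simp only [z, Pi.ofNat_apply] <;> split_ifs <;> norm_num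
  have hterm : ∀ i j, 0 ≤ r i j * (z - x) i j := fun i j => by
    have h0 : 0 ≤ x i j := hx.1.1 i j
    have h2 : x i j ≤ 2 := hx.1.2 i j
    simp only [z, Pi.sub_apply]
    split_ifs with h
    · exact mul_nonneg h.le (by linarith)
    · exact mul_nonneg_of_nonpos_of_nonpos (not_lt.1 h) (by linarith)
  have hle : LPobj Adj r (z - x) ≤ 0 := by
    have : LPobj Adj r z ≤ LPobj Adj r x := le_of_add_le_add_left (hmax hz)
    rw [← LPobjBilin_apply, map_sub]
    exact sub_nonpos.2 this
  have hzero : r i j * (z i j - x i j) = 0 :=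
    (LPobj_eq_zero_iff fun i j _ => hterm i j).1
      (hle.antisymm (LPobj_nonneg fun i j _ => hterm i j)) i j hij
  have hxz (h : r i j ≠ 0) : x i j = z i j :=
    (sub_eq_zero.1 ((mul_eq_zero.1 hzero).resolve_left h)).symm
  exact ⟨fun h => (hxz (sub_pos.2 h).ne').trans (if_pos (sub_pos.2 h)),
    fun h => (hxz (sub_neg.2 h).ne).trans (if_neg (sub_neg.2 h).not_gt)⟩

theorem multiplier_eq_of_isMinOn_lagrangian (hAdj : ∀ i j, Adj i j → Adj j i) {M : ℝ}
    (hM : 0 ≤ M) (hx : ∀ i j, x i j = x j i) (hy : y ∈ Set.Icc 0 fun _ : V => M)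
    (hmin : IsMinOn (fun y => lagrangian Adj w y x) (Set.Icc 0 fun _ => M) y) (i : V) :
    (1 < load Adj x i → y i = M) ∧ (load Adj x i < 1 → y i = 0) := by
  let z : V → ℝ := fun i => if 1 < load Adj x i then M else 0
  have hz : z ∈ Set.Icc 0 fun _ : V => M := by
    refine ⟨fun i => ?_, fun i => ?_⟩ <;> simp only [z, Pi.zero_apply] <;> split_ifs <;> simp [hM]
  have hterm : ∀ i, 0 ≤ (y i - z i) * (1 - load Adj x i) := fun i => by
    have h0 : 0 ≤ y i := hy.1 i
    have hle_M : y i ≤ M := hy.2 i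
    simp only [z]
    split_ifs with h
    · exact mul_nonneg_of_nonpos_of_nonpos (by linarith) (by linarith)
    · exact mul_nonneg (by linarith) (by linarith)
  have hle : ∑ i, (y i - z i) * (1 - load Adj x i) ≤ 0 := by
    have := hmin hz
    simp only [Set.mem_ofPred_eq, lagrangian_eq hAdj w _ hx] at this
    simpa only [sub_mul, sum_sub_distrib, sub_nonpos] using le_of_add_le_add_right this
  have hzero : (y i - z i) * (1 - load Adj x i) = 0 :=
    (sum_eq_zero_iff_of_nonneg fun i _ => hterm i).1
      (hle.antisymm (sum_nonneg fun i _ => hterm i)) i (mem_univ i)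
  have hyz (h : load Adj x i ≠ 1) : y i = z i :=
    sub_eq_zero.1 ((mul_eq_zero.1 hzero).resolve_right (sub_ne_zero.2 h.symm))
  exact ⟨fun h => (hyz h.ne').trans (if_pos h), fun h => (hyz h.ne).trans (if_neg h.not_gt)⟩

theorem exists_dualFeasible_complementarySlack (hAdj : ∀ i j, Adj i j → Adj j i)
    (hw : ∀ i j, w i j = w j i) :
    ∃ y x, DualFeasible Adj w y ∧ LPFeasible Adj x ∧ ComplementarySlack Adj w y x := by
  obtain ⟨M, hM, hMw⟩ : ∃ M, 0 ≤ M ∧ ∀ i j, w i j < M := by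
    obtain ⟨M, hM⟩ := (Set.finite_range fun p : V × V => w p.1 p.2).bddAbove
    exact ⟨max M 0 + 1, by positivity, fun i j =>
      ((hM ⟨(i, j), rfl⟩).trans (le_max_left M 0)).trans_lt (lt_add_one _)⟩
  obtain ⟨y, hy, x, hx, hsaddle⟩ := exists_isSaddlePointOn_lagrangian hAdj w hM
  have hedge {i j : V} : Adj i j →
      (y i + y j < w i j → x i j = 2) ∧ (w i j < y i + y j → x i j = 0) :=
    edge_eq_of_isMaxOn_lagrangian hw hx fun z hz => hsaddle y hy z hz
  have hnode := multiplier_eq_of_isMinOn_lagrangian hAdj hM hx.2 hy fun z hz => hsaddle z hz x hx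
  have hload : ∀ i, load Adj x i ≤ 1 := fun i => by
    by_contra! h
    have hzero : load Adj x i = 0 := sum_eq_zero fun j hj => (hedge (mem_filter.1 hj).2).2 <| by
      have h0 : 0 ≤ y j := hy.1 j
      linarith [(hnode i).1 h, hMw i j]
    linarith
  have hfeas : LPFeasible Adj x := ⟨hx.2, fun i j _ => hx.1.1 i j, hload⟩
  have hcover : ∀ i j, Adj i j → w i j ≤ y i + y j := fun i j hij => by
    by_contra! h
    linarith [(hedge hij).1 h, hfeas.le_one hij]
  exact ⟨y, x, ⟨hy.1, hcover⟩, hfeas,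
    fun i hi => (hload i).eq_of_not_lt fun h => hi ((hnode i).2 h),
    fun i j hij hne => ((hcover i j hij).eq_of_not_lt fun h => hne ((hedge hij).2 h)).symm⟩

theorem exists_dualFeasible_sum_eq (hAdj : ∀ i j, Adj i j → Adj j i)
    (hw : ∀ i j, w i j = w j i) (hx : LPFeasible Adj x)
    (hopt : ∀ z, LPFeasible Adj z → LPobj Adj w z ≤ LPobj Adj w x) :
    ∃ y, DualFeasible Adj w y ∧ ∑ i, y i = LPobj Adj w x := by
  obtain ⟨y, z, hy, hz, hslack⟩ := exists_dualFeasible_complementarySlack hAdj hw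
  have hyz : ∑ i, y i = LPobj Adj w z := (hy.sum_eq_LPobj_iff hAdj hz).2 hslack
  exact ⟨y, hy, (hyz.trans_le (hopt z hz)).antisymm (hy.LPobj_le_sum hAdj hx)⟩

end StrongDuality

section PartialPermutations

variable {V : Type*} [DecidableEq V]

theorem toMatrix_eq_zero_or_one (f : V ≃. V) (i j : V) :
    (f.toMatrix i j : ℝ) = 0 ∨ (f.toMatrix i j : ℝ) = 1 := by
  rw [PEquiv.toMatrix_apply]
  exact (ite_eq_or_eq _ _ _).symm

theorem toMatrix_nonneg (f : V ≃. V) (i j : V) : 0 ≤ (f.toMatrix i j : ℝ) := by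
  rcases toMatrix_eq_zero_or_one f i j with h | h <;> rw [h]
  exact zero_le_one

/-- The partial permutation of `V` induced by a permutation of `V ⊕ V` on the left copy. -/
def leftPart (σ : Equiv.Perm (V ⊕ V)) : V ≃. V where
  toFun i := (σ (Sum.inl i)).getLeft?
  invFun j := (σ.symm (Sum.inl j)).getLeft?
  inv i j := by
    simp only [Sum.getLeft?_eq_some_iff, Equiv.symm_apply_eq]
    exact eq_comm

theorem toMatrix_leftPart (σ : Equiv.Perm (V ⊕ V)) (i j : V) :
    ((leftPart σ).toMatrix i j : ℝ) = σ.toPEquiv.toMatrix (Sum.inl i) (Sum.inl j) := by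
  simp only [PEquiv.toMatrix_apply, leftPart, PEquiv.coe_mk, Sum.getLeft?_eq_some_iff,
    Equiv.toPEquiv_apply, Option.mem_def, Option.some.injEq]

variable (Adj : V → V → Prop) [DecidableRel Adj]

/-- The edge vector obtained from the arcs of a partial permutation `f` by weighting, at each node
`i`, the outgoing arc by `(1 + s i) / 2` and the incoming arc by `(1 - s i) / 2`. -/
noncomputable def reorient (f : V ≃. V) (s : V → ℝ) (i j : V) : ℝ :=
  if Adj i j then ((1 + s i) * f.toMatrix i j + (1 - s i) * f.toMatrix j i) / 2 else 0

/-- The symmetrization of a partial permutation, restricted to the edges. -/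
noncomputable def symmetrize (f : V ≃. V) : V → V → ℝ := reorient Adj f 0

variable {Adj} {f : V ≃. V} {i j : V}

theorem reorient_apply (s : V → ℝ) (hij : Adj i j) :
    reorient Adj f s i j = ((1 + s i) * f.toMatrix i j + (1 - s i) * f.toMatrix j i) / 2 :=
  if_pos hij

theorem symmetrize_apply (hij : Adj i j) :
    symmetrize Adj f i j = (f.toMatrix i j + f.toMatrix j i) / 2 := by
  simp [symmetrize, reorient_apply _ hij]

theorem symmetrize_eq_zero_or_half_or_one (hij : Adj i j) :
    symmetrize Adj f i j = 0 ∨ symmetrize Adj f i j = 1 / 2 ∨ symmetrize Adj f i j = 1 := by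
  rw [symmetrize_apply hij]
  rcases toMatrix_eq_zero_or_one f i j with h | h <;>
    rcases toMatrix_eq_zero_or_one f j i with h' | h' <;> rw [h, h'] <;> norm_num

variable [Fintype V]

theorem sum_toMatrix_le_one (f : V ≃. V) (i : V) : ∑ j, (f.toMatrix i j : ℝ) ≤ 1 := by
  simp only [PEquiv.toMatrix_apply, Option.mem_def]
  rcases f i with _ | k <;> simp

theorem load_reorient_le_one {s : V → ℝ} (hs : ∀ i, |s i| ≤ 1) (i : V) :
    load Adj (reorient Adj f s) i ≤ 1 := by
  obtain ⟨hlow, hhigh⟩ := abs_le.1 (hs i)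
  have hterm_nonneg (j : V) :
      0 ≤ ((1 + s i) * f.toMatrix i j + (1 - s i) * f.toMatrix j i) / 2 := by
    have := mul_nonneg (show 0 ≤ 1 + s i by linarith) (toMatrix_nonneg f i j)
    have := mul_nonneg (show 0 ≤ 1 - s i by linarith) (toMatrix_nonneg f j i)
    positivity
  have hcol : ∑ j, (f.toMatrix j i : ℝ) ≤ 1 := by
    simpa only [PEquiv.toMatrix_symm, Matrix.transpose_apply] using sum_toMatrix_le_one f.symm i
  calc load Adj (reorient Adj f s) i
      = ∑ j with Adj i j, ((1 + s i) * f.toMatrix i j + (1 - s i) * f.toMatrix j i) / 2 :=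
        sum_congr rfl fun j hj => reorient_apply s (mem_filter.1 hj).2
    _ ≤ ∑ j, ((1 + s i) * f.toMatrix i j + (1 - s i) * f.toMatrix j i) / 2 :=
        sum_le_sum_of_subset_of_nonneg (filter_subset _ _) fun j _ _ => hterm_nonneg j
    _ = ((1 + s i) * ∑ j, f.toMatrix i j + (1 - s i) * ∑ j, f.toMatrix j i) / 2 := by
        rw [← sum_div, sum_add_distrib, mul_sum, mul_sum]
    _ ≤ ((1 + s i) * 1 + (1 - s i) * 1) / 2 := by
        gcongr
        · linarith
        · exact sum_toMatrix_le_one f i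
    _ = 1 := by ring

theorem lpFeasible_reorient (hAdj : ∀ i j, Adj i j → Adj j i) {s : V → ℝ} (hs : ∀ i, |s i| ≤ 1)
    (hsupp : ∀ i j, Adj i j → (f.toMatrix i j : ℝ) ≠ 0 → s i + s j = 0) :
    LPFeasible Adj (reorient Adj f s) := by
  refine ⟨fun i j => ?_, fun i j hij => ?_, load_reorient_le_one hs⟩
  · by_cases hij : Adj i j
    · have h (i j : V) (hij : Adj i j) : (f.toMatrix i j : ℝ) * (s i + s j) = 0 :=
        mul_eq_zero.2 (or_iff_not_imp_left.2 (hsupp i j hij))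
      rw [reorient_apply s hij, reorient_apply s (hAdj i j hij)]
      linarith [h i j hij, h j i (hAdj i j hij)]
    · rw [reorient, reorient, if_neg hij, if_neg fun hji => hij (hAdj j i hji)]
  · obtain ⟨hlow, hhigh⟩ := abs_le.1 (hs i)
    have := mul_nonneg (show 0 ≤ 1 + s i by linarith) (toMatrix_nonneg f i j)
    have := mul_nonneg (show 0 ≤ 1 - s i by linarith) (toMatrix_nonneg f j i)
    rw [reorient_apply s hij]
    positivity

theorem lpFeasible_symmetrize (hAdj : ∀ i j, Adj i j → Adj j i) (f : V ≃. V) :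
    LPFeasible Adj (symmetrize Adj f) :=
  lpFeasible_reorient hAdj (by simp) (by simp)

theorem fromBlocks_mem_doublyStochastic {X : Matrix V V ℝ} (hX_symm : X.IsSymm)
    (hX_nonneg : ∀ i j, 0 ≤ X i j) (hX_row : ∀ i, ∑ j, X i j ≤ 1) :
    Matrix.fromBlocks X (Matrix.diagonal fun i => 1 - ∑ j, X i j)
      (Matrix.diagonal fun i => 1 - ∑ j, X i j) X ∈ doublyStochastic ℝ (V ⊕ V) := by
  have hX_col (j : V) : ∑ i, X i j = ∑ i, X j i := by simp only [hX_symm.apply j]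
  have hdiag_nonneg (i j : V) : 0 ≤ Matrix.diagonal (fun i => 1 - ∑ j, X i j) i j := by
    rw [Matrix.diagonal_apply]
    split_ifs
    exacts [sub_nonneg.2 (hX_row i), le_rfl]
  rw [mem_doublyStochastic_iff_sum]
  refine ⟨?_, ?_, ?_⟩
  · rintro (i | i) (j | j) <;> simp [hX_nonneg, hdiag_nonneg]
  · rintro (i | i) <;> simp [Fintype.sum_sum_type, Matrix.diagonal_apply]
  · rintro (i | i) <;> simp [Fintype.sum_sum_type, hX_col, Matrix.diagonal_apply]

theorem LPFeasible.exists_eq_sum_symmetrize (hAdj : ∀ i j, Adj i j → Adj j i) {x : V → V → ℝ}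
    (hx : LPFeasible Adj x) :
    ∃ c : Equiv.Perm (V ⊕ V) → ℝ, (∀ σ, 0 ≤ c σ) ∧ ∑ σ, c σ = 1 ∧
      ∀ i j, Adj i j → x i j = ∑ σ, c σ * symmetrize Adj (leftPart σ) i j := by
  let X : Matrix V V ℝ := fun i j => if Adj i j then x i j else 0
  have hX_symm (i j : V) : X i j = X j i := by
    simp only [X, hx.1 i j, show Adj i j ↔ Adj j i from ⟨hAdj i j, hAdj j i⟩]
  have hX_nonneg (i j : V) : 0 ≤ X i j := by
    simp only [X]
    split_ifs with h
    exacts [hx.2.1 i j h, le_rfl]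
  have hX_row (i : V) : ∑ j, X i j ≤ 1 := (sum_filter _ _).ge.trans (hx.load_le_one i)
  obtain ⟨c, hc_nonneg, hc_sum, hc⟩ := exists_eq_sum_perm_of_mem_doublyStochastic
    (fromBlocks_mem_doublyStochastic (.ext fun i j => hX_symm j i) hX_nonneg hX_row)
  have hX (i j : V) : X i j = ∑ σ, c σ * (leftPart σ).toMatrix i j := by
    have := congrFun₂ hc (Sum.inl i) (Sum.inl j)
    simp only [Matrix.fromBlocks_apply₁₁, Matrix.sum_apply, Matrix.smul_apply, smul_eq_mul] at this
    simp only [← this, toMatrix_leftPart, Equiv.Perm.permMatrix]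
  refine ⟨c, hc_nonneg, hc_sum, fun i j hij => ?_⟩
  calc x i j
    _ = (X i j + X j i) / 2 := by
      rw [← hX_symm i j, add_self_div_two]
      exact (if_pos hij).symm
    _ = ∑ σ, c σ * symmetrize Adj (leftPart σ) i j := by
      simp only [hX, symmetrize_apply hij, ← sum_add_distrib, sum_div, mul_div_assoc', mul_add]

end PartialPermutations

section UniqueOptimum

variable {V : Type*} [Fintype V]

/-- The LP is pointed at `x`: every feasible point that differs from `x` on some edge has a strictly
smaller objective value. -/
structure IsUniqueOpt (Adj : V → V → Prop) [DecidableRel Adj] (w x : V → V → ℝ) : Prop where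
  feasible : LPFeasible Adj x
  lt_of_ne : ∀ z, LPFeasible Adj z → (∃ i j, Adj i j ∧ z i j ≠ x i j) →
    LPobj Adj w z < LPobj Adj w x

variable {Adj : V → V → Prop} [DecidableRel Adj] {w x z z' : V → V → ℝ}

theorem LPobj_le_of_lt_of_ne
    (h : (∃ i j, Adj i j ∧ z i j ≠ x i j) → LPobj Adj w z < LPobj Adj w x) :
    LPobj Adj w z ≤ LPobj Adj w x := by
  by_cases hne : ∃ i j, Adj i j ∧ z i j ≠ x i j
  · exact (h hne).le
  · push Not at hne
    exact (LPobj_congr fun i j hij => by rw [hne i j hij]).le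

theorem IsUniqueOpt.le (hx : IsUniqueOpt Adj w x) (hz : LPFeasible Adj z) :
    LPobj Adj w z ≤ LPobj Adj w x :=
  LPobj_le_of_lt_of_ne (hx.lt_of_ne z hz)

theorem IsUniqueOpt.eq_of_le (hx : IsUniqueOpt Adj w x) (hz : LPFeasible Adj z)
    (hle : LPobj Adj w x ≤ LPobj Adj w z) {i j : V} (hij : Adj i j) : z i j = x i j := by
  by_contra hne
  exact hle.not_gt (hx.lt_of_ne z hz ⟨i, j, hij, hne⟩)

theorem IsUniqueOpt.eq_of_add_eq_two_mul (hx : IsUniqueOpt Adj w x) (hz : LPFeasible Adj z)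
    (hz' : LPFeasible Adj z') (hsum : ∀ i j, Adj i j → z i j + z' i j = 2 * x i j) {i j : V}
    (hij : Adj i j) : z i j = x i j := by
  refine hx.eq_of_le hz ?_ hij
  have hobj : LPobj Adj w z + LPobj Adj w z' = 2 * LPobj Adj w x := by
    calc LPobj Adj w z + LPobj Adj w z'
      _ = LPobj Adj w (z + z') := (map_add (LPobjBilin Adj w) z z').symm
      _ = LPobj Adj w ((2 : ℝ) • x) := LPobj_congr fun i j hij => congrArg _ (hsum i j hij)
      _ = 2 * LPobj Adj w x := map_smul (LPobjBilin Adj w) 2 x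
  linarith [hx.le hz']

theorem LPobj_eq_sum_mul_symmetrize [DecidableEq V] (w : V → V → ℝ)
    {c : Equiv.Perm (V ⊕ V) → ℝ}
    (hc : ∀ i j, Adj i j → x i j = ∑ σ, c σ * symmetrize Adj (leftPart σ) i j) :
    LPobj Adj w x = ∑ σ, c σ * LPobj Adj w (symmetrize Adj (leftPart σ)) := by
  calc LPobj Adj w x = LPobj Adj w (∑ σ, c σ • symmetrize Adj (leftPart σ)) :=
        LPobj_congr fun i j hij => by simp [hc i j hij, Finset.sum_apply]
    _ = ∑ σ, c σ * LPobj Adj w (symmetrize Adj (leftPart σ)) := by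
        simp only [← LPobjBilin_apply, map_sum, map_smul, smul_eq_mul]

theorem LPobj_lt_of_symmetrize_le [DecidableEq V] {c : Equiv.Perm (V ⊕ V) → ℝ}
    (hc_nonneg : ∀ σ, 0 ≤ c σ) (hc_sum : ∑ σ, c σ = 1)
    (hc : ∀ i j, Adj i j → x i j = ∑ σ, c σ * symmetrize Adj (leftPart σ) i j) {b : ℝ}
    (hle : ∀ σ, LPobj Adj w (symmetrize Adj (leftPart σ)) ≤ b)
    (hlt : ∃ σ, c σ ≠ 0 ∧ LPobj Adj w (symmetrize Adj (leftPart σ)) < b) :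
    LPobj Adj w x < b := by
  obtain ⟨σ, hσ, hσ_lt⟩ := hlt
  calc LPobj Adj w x = ∑ σ, c σ * LPobj Adj w (symmetrize Adj (leftPart σ)) :=
        LPobj_eq_sum_mul_symmetrize w hc
    _ < ∑ σ, c σ * b := sum_lt_sum
        (fun σ _ => mul_le_mul_of_nonneg_left (hle σ) (hc_nonneg σ))
        ⟨σ, mem_univ σ, mul_lt_mul_of_pos_left hσ_lt ((hc_nonneg σ).lt_of_ne' hσ)⟩
    _ = b := by rw [← sum_mul, hc_sum, one_mul]

theorem LPFeasible.exists_LPobj_le_symmetrize [DecidableEq V]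
    (hAdj : ∀ i j, Adj i j → Adj j i) (hx : LPFeasible Adj x) (w : V → V → ℝ) :
    ∃ σ : Equiv.Perm (V ⊕ V), LPobj Adj w x ≤ LPobj Adj w (symmetrize Adj (leftPart σ)) := by
  obtain ⟨c, hc_nonneg, hc_sum, hc⟩ := hx.exists_eq_sum_symmetrize hAdj
  by_contra! hlt
  obtain ⟨σ, -, hσ⟩ : ∃ σ ∈ univ, c σ ≠ 0 := exists_ne_zero_of_sum_ne_zero (by simp [hc_sum])
  exact (LPobj_lt_of_symmetrize_le hc_nonneg hc_sum hc (fun σ => (hlt σ).le)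
    ⟨σ, hσ, hlt σ⟩).false

theorem IsUniqueOpt.of_halfIntegral (hAdj : ∀ i j, Adj i j → Adj j i) (hx : LPFeasible Adj x)
    (hlt : ∀ z, LPFeasible Adj z → (∀ i j, Adj i j → z i j = 0 ∨ z i j = 1 / 2 ∨ z i j = 1) →
      (∃ i j, Adj i j ∧ z i j ≠ x i j) → LPobj Adj w z < LPobj Adj w x) :
    IsUniqueOpt Adj w x := by
  classical
  refine ⟨hx, fun z hz ⟨i, j, hij, hne⟩ => ?_⟩
  obtain ⟨c, hc_nonneg, hc_sum, hc⟩ := hz.exists_eq_sum_symmetrize hAdj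
  have hlt_symm (σ : Equiv.Perm (V ⊕ V))
      (h : ∃ i j, Adj i j ∧ symmetrize Adj (leftPart σ) i j ≠ x i j) :
      LPobj Adj w (symmetrize Adj (leftPart σ)) < LPobj Adj w x :=
    hlt _ (lpFeasible_symmetrize hAdj _) (fun _ _ => symmetrize_eq_zero_or_half_or_one) h
  have hle_symm (σ : Equiv.Perm (V ⊕ V)) :
      LPobj Adj w (symmetrize Adj (leftPart σ)) ≤ LPobj Adj w x :=
    LPobj_le_of_lt_of_ne (hlt_symm σ)
  obtain ⟨σ, hσ, hσ_ne⟩ : ∃ σ, c σ ≠ 0 ∧ symmetrize Adj (leftPart σ) i j ≠ x i j := by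
    by_contra! h
    refine hne ?_
    calc z i j = ∑ σ, c σ * symmetrize Adj (leftPart σ) i j := hc i j hij
      _ = ∑ σ, c σ * x i j := sum_congr rfl fun σ _ => mul_eq_mul_left_iff.2
          (or_iff_not_imp_right.2 (h σ))
      _ = x i j := by rw [← sum_mul, hc_sum, one_mul]
  exact LPobj_lt_of_symmetrize_le hc_nonneg hc_sum hc hle_symm
    ⟨σ, hσ, hlt_symm σ ⟨i, j, hij, hσ_ne⟩⟩

theorem IsUniqueOpt.exists_eq_symmetrize [DecidableEq V]
    (hAdj : ∀ i j, Adj i j → Adj j i) (hx : IsUniqueOpt Adj w x) :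
    ∃ f : V ≃. V, ∀ i j, Adj i j → x i j = symmetrize Adj f i j := by
  obtain ⟨σ, hσ⟩ := hx.feasible.exists_LPobj_le_symmetrize hAdj w
  exact ⟨leftPart σ, fun i j hij =>
    (hx.eq_of_le (lpFeasible_symmetrize hAdj _) hσ hij).symm⟩

theorem IsUniqueOpt.eq_zero_or_half_or_one (hAdj : ∀ i j, Adj i j → Adj j i)
    (hx : IsUniqueOpt Adj w x) {i j : V} (hij : Adj i j) :
    x i j = 0 ∨ x i j = 1 / 2 ∨ x i j = 1 := by
  classical
  obtain ⟨f, hf⟩ := hx.exists_eq_symmetrize hAdj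
  rw [hf i j hij]
  exact symmetrize_eq_zero_or_half_or_one hij

-- Reorienting `f` by `s` and by `-s` gives two feasible points with midpoint `x`, so both are `x`.
theorem IsUniqueOpt.eq_zero_or_one_of_alternating (hAdj : ∀ i j, Adj i j → Adj j i)
    (hx : IsUniqueOpt Adj w x) {s : V → ℝ} (hs : ∀ i, |s i| ≤ 1)
    (halt : ∀ i j, Adj i j → x i j ≠ 0 → s i + s j = 0) {i j : V} (hij : Adj i j)
    (hi : s i ≠ 0) : x i j = 0 ∨ x i j = 1 := by
  classical
  obtain ⟨f, hf⟩ := hx.exists_eq_symmetrize hAdj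
  have hsupp (i j : V) (hij : Adj i j) (h : (f.toMatrix i j : ℝ) ≠ 0) : s i + s j = 0 := by
    refine halt i j hij (ne_of_gt ?_)
    rw [hf i j hij, symmetrize_apply hij]
    linarith [toMatrix_nonneg f j i, (toMatrix_nonneg f i j).lt_of_ne' h]
  have hfeas : LPFeasible Adj (reorient Adj f s) := lpFeasible_reorient hAdj hs hsupp
  have hfeas_neg : LPFeasible Adj (reorient Adj f (-s)) :=
    lpFeasible_reorient hAdj (by simpa using hs) fun i j hij h => by
      simp only [Pi.neg_apply]
      linarith [hsupp i j hij h]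
  have heq : reorient Adj f s i j = x i j := by
    refine hx.eq_of_add_eq_two_mul hfeas hfeas_neg (fun i j hij => ?_) hij
    rw [hf i j hij, reorient_apply s hij, reorient_apply (-s) hij, symmetrize_apply hij,
      Pi.neg_apply]
    ring
  have hbalanced : (f.toMatrix i j : ℝ) = f.toMatrix j i := by
    rw [hf i j hij, reorient_apply s hij, symmetrize_apply hij] at heq
    exact mul_left_cancel₀ hi (by linarith)
  rw [hf i j hij, symmetrize_apply hij, ← hbalanced, add_self_div_two]
  exact toMatrix_eq_zero_or_one f i j

theorem IsUniqueOpt.eq_zero_or_one_of_bipartite (hAdj : ∀ i j, Adj i j → Adj j i)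
    (hx : IsUniqueOpt Adj w x) {A B : Set V} (hAB : Disjoint A B)
    (hA : ∀ i j, Adj i j → x i j ≠ 0 → i ∈ A → j ∈ B)
    (hB : ∀ i j, Adj i j → x i j ≠ 0 → i ∈ B → j ∈ A) {i j : V} (hij : Adj i j) (hi : i ∈ A) :
    x i j = 0 ∨ x i j = 1 := by
  classical
  let s : V → ℝ := A.indicator 1 - B.indicator 1
  have hs_left {k : V} (hk : k ∈ A) : s k = 1 := by
    simp [s, hk, Set.disjoint_left.1 hAB hk]
  have hs_right {k : V} (hk : k ∈ B) : s k = -1 := by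
    simp [s, hk, Set.disjoint_right.1 hAB hk]
  have hs_zero {k : V} (hkA : k ∉ A) (hkB : k ∉ B) : s k = 0 := by
    simp [s, hkA, hkB]
  refine hx.eq_zero_or_one_of_alternating hAdj (s := s) (fun k => ?_) (fun k l hkl hne => ?_) hij
    (by simp [hs_left hi])
  · by_cases hkA : k ∈ A
    · simp [hs_left hkA]
    by_cases hkB : k ∈ B
    · simp [hs_right hkB]
    · simp [hs_zero hkA hkB]
  · have hlk := hAdj k l hkl
    have hne' : x l k ≠ 0 := hx.feasible.1 k l ▸ hne
    by_cases hkA : k ∈ A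
    · rw [hs_left hkA, hs_right (hA k l hkl hne hkA), add_neg_cancel]
    by_cases hkB : k ∈ B
    · rw [hs_right hkB, hs_left (hB k l hkl hne hkB), neg_add_cancel]
    · rw [hs_zero hkA hkB, hs_zero (fun h => hkB (hA l k hlk hne' h))
        fun h => hkA (hB l k hlk hne' h), add_zero]

end UniqueOptimum

section StrictComplementarity

variable {V : Type*} [Fintype V]

/-- A dual optimum that is strictly complementary to `x` on the edges: it is tight exactly on the
support of `x`. -/
structure StrictlyComplementary (Adj : V → V → Prop) [DecidableRel Adj] (w : V → V → ℝ) (y : V → ℝ)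
    (x : V → V → ℝ) : Prop extends DualFeasible Adj w y, ComplementarySlack Adj w y x where
  ne_zero_of_add_eq : ∀ i j, Adj i j → y i + y j = w i j → x i j ≠ 0

variable {Adj : V → V → Prop} [DecidableRel Adj] {w x : V → V → ℝ}

theorem IsUniqueOpt.exists_pos_forall_LPobj_le_add_smul (hAdj : ∀ i j, Adj i j → Adj j i)
    (hx : IsUniqueOpt Adj w x) (v : V → V → ℝ) :
    ∃ η : ℝ, 0 < η ∧
      ∀ z, LPFeasible Adj z → LPobj Adj (w + η • v) z ≤ LPobj Adj (w + η • v) x := by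
  classical
  have hobj (η : ℝ) (z : V → V → ℝ) :
      LPobj Adj (w + η • v) z = LPobj Adj w z + η * LPobj Adj v z := by
    simp only [← LPobjBilin_apply, map_add, map_smul, LinearMap.add_apply, LinearMap.smul_apply,
      smul_eq_mul]
  have hstable (σ : Equiv.Perm (V ⊕ V)) : ∀ᶠ η : ℝ in 𝓝[>] 0,
      LPobj Adj (w + η • v) (symmetrize Adj (leftPart σ)) ≤ LPobj Adj (w + η • v) x := by
    by_cases h : ∃ i j, Adj i j ∧ symmetrize Adj (leftPart σ) i j ≠ x i j
    · refine eventually_nhdsWithin_of_eventually_nhds ?_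
      have hlt := hx.lt_of_ne _ (lpFeasible_symmetrize hAdj _) h
      simp only [hobj]
      exact (ContinuousAt.eventually_lt (by fun_prop) (by fun_prop) (by simpa using hlt)).mono
        fun _ => le_of_lt
    · push Not at h
      exact .of_forall fun η => (LPobj_congr fun i j hij => by rw [h i j hij]).le
  obtain ⟨η, hη_stable, hη⟩ := ((eventually_all.2 hstable).and self_mem_nhdsWithin).exists
  refine ⟨η, hη, fun z hz => ?_⟩
  obtain ⟨σ, hσ⟩ := hz.exists_LPobj_le_symmetrize hAdj (w + η • v)
  exact hσ.trans (hη_stable σ)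

-- Raising the weights off the support of `x` keeps `x` optimal, and makes those edges slack in `w`.
theorem IsUniqueOpt.exists_strictlyComplementary (hAdj : ∀ i j, Adj i j → Adj j i)
    (hw : ∀ i j, w i j = w j i) (hx : IsUniqueOpt Adj w x) :
    ∃ y, StrictlyComplementary Adj w y x := by
  classical
  let v : V → V → ℝ := fun i j => if x i j = 0 then 1 else 0
  obtain ⟨η, hη, hopt⟩ := hx.exists_pos_forall_LPobj_le_add_smul hAdj v
  have hsymm (i j : V) : (w + η • v) i j = (w + η • v) j i := by
    simp [v, hw i j, hx.feasible.1 i j]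
  obtain ⟨y, hy, hsum⟩ := exists_dualFeasible_sum_eq hAdj hsymm hx.feasible hopt
  have hslack := (hy.sum_eq_LPobj_iff hAdj hx.feasible).1 hsum
  have hweight (i j : V) : (w + η • v) i j = w i j + if x i j = 0 then η else 0 := by
    simp [v]
  refine ⟨y, ⟨hy.nonneg, fun i j hij => ?_⟩, ⟨hslack.load_eq_one, fun i j hij hne => ?_⟩,
    fun i j hij htight hzero => ?_⟩
  · have := hy.cover i j hij
    rw [hweight] at this
    split_ifs at this <;> linarith
  · rw [hslack.add_eq_weight i j hij hne, hweight, if_neg hne, add_zero]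
  · have := hy.cover i j hij
    rw [hweight, if_pos hzero] at this
    linarith

end StrictComplementarity

section TightEdges

variable {V : Type*}

/-- An edge whose dual constraint holds with equality at `γ`. -/
def TightEdge (Adj : V → V → Prop) (w : V → V → ℝ) (γ : V → ℝ) (i j : V) : Prop :=
  Adj i j ∧ γ i + γ j = w i j

/-- A tight edge that forms a connected component of the graph of tight edges. -/
structure IsolatedTightEdge (Adj : V → V → Prop) (w : V → V → ℝ) (γ : V → ℝ) (i j : V) :
    Prop where
  tight : TightEdge Adj w γ i j
  eq_right : ∀ k, TightEdge Adj w γ i k → k = j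
  eq_left : ∀ k, TightEdge Adj w γ j k → k = i

/-- At the node `i` the dual vector `γ` agrees with the reference dual vector `y`, or `i` is matched
by `x` along an isolated tight edge, in which case the two values need not agree. -/
def Reconciled (Adj : V → V → Prop) (w x : V → V → ℝ) (y γ : V → ℝ) (i : V) : Prop :=
  γ i = y i ∨ ∃ j, IsolatedTightEdge Adj w γ i j ∧ x i j = 1

/-- The unreconciled nodes at which `γ` exceeds `y` by exactly `t`. -/
def Discrepant (Adj : V → V → Prop) (w x : V → V → ℝ) (y γ : V → ℝ) (t : ℝ) (i : V) : Prop :=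
  ¬ Reconciled Adj w x y γ i ∧ γ i - y i = t

/-- A positive bound on the differences between `γ` and `y` at the unreconciled nodes. -/
structure IsDiscrepancyBound (Adj : V → V → Prop) (w x : V → V → ℝ) (y γ : V → ℝ) (t : ℝ) :
    Prop where
  pos : 0 < t
  abs_le : ∀ i, ¬ Reconciled Adj w x y γ i → |γ i - y i| ≤ t

/-- Every node with a nonzero value is on an isolated tight edge or on two tight edges. -/
def TightlySupported (Adj : V → V → Prop) (w : V → V → ℝ) (γ : V → ℝ) : Prop :=
  ∀ i, γ i ≠ 0 → (∃ j, IsolatedTightEdge Adj w γ i j) ∨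
    ∃ j k, j ≠ k ∧ TightEdge Adj w γ i j ∧ TightEdge Adj w γ i k

variable {Adj : V → V → Prop} {w x : V → V → ℝ} {y γ : V → ℝ} {t : ℝ} {i j : V}

theorem TightEdge.symm (hAdj : ∀ i j, Adj i j → Adj j i) (hw : ∀ i j, w i j = w j i)
    (h : TightEdge Adj w γ i j) : TightEdge Adj w γ j i :=
  ⟨hAdj i j h.1, by rw [add_comm, h.2, hw]⟩

theorem IsolatedTightEdge.symm (hAdj : ∀ i j, Adj i j → Adj j i) (hw : ∀ i j, w i j = w j i)
    (h : IsolatedTightEdge Adj w γ i j) : IsolatedTightEdge Adj w γ j i :=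
  ⟨h.tight.symm hAdj hw, h.eq_left, h.eq_right⟩

variable [Fintype V] [DecidableRel Adj]

theorem Discrepant.of_tightEdge (hAdj : ∀ i j, Adj i j → Adj j i) (hw : ∀ i j, w i j = w j i)
    (hx : LPFeasible Adj x) (hy : StrictlyComplementary Adj w y x)
    (ht : IsDiscrepancyBound Adj w x y γ t) (hi : Discrepant Adj w x y γ t i)
    (hij : TightEdge Adj w γ i j) : Discrepant Adj w x y γ (-t) j ∧ x i j ≠ 0 := by
  obtain ⟨hadj, htight⟩ := hij
  have hcover := hy.cover i j hadj
  have hj : ¬ Reconciled Adj w x y γ j := by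
    rintro (heq | ⟨k, hjk, hone⟩)
    · linarith [hi.2, ht.pos]
    · obtain rfl : i = k := hjk.eq_right i (.symm hAdj hw ⟨hadj, htight⟩)
      exact hi.1 (.inr ⟨j, hjk.symm hAdj hw, (hx.1 i j).trans hone⟩)
  have hj_eq : γ j - y j = -t := by linarith [(abs_le.1 (ht.abs_le j hj)).1, ht.pos, hi.2]
  exact ⟨⟨hj, hj_eq⟩, hy.ne_zero_of_add_eq i j hadj (by linarith [hi.2])⟩

theorem Discrepant.of_support (hAdj : ∀ i j, Adj i j → Adj j i) (hw : ∀ i j, w i j = w j i)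
    (hx : LPFeasible Adj x) (hy : StrictlyComplementary Adj w y x) (hγ : DualFeasible Adj w γ)
    (ht : IsDiscrepancyBound Adj w x y γ t)
    (hj : Discrepant Adj w x y γ (-t) j) (hji : Adj j i) (hsupp : x j i ≠ 0) :
    Discrepant Adj w x y γ t i ∧ TightEdge Adj w γ j i := by
  have hcover := hγ.cover j i hji
  have htight := hy.add_eq_weight j i hji hsupp
  have hi : ¬ Reconciled Adj w x y γ i := by
    rintro (heq | ⟨k, hik, hone⟩)
    · linarith [hj.2, ht.pos]
    · obtain rfl : k = j := by
        by_contra hne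
        exact hsupp ((hx.1 j i).trans
          (hx.eq_zero_of_eq_one hik.tight.1 (hAdj j i hji) hne hone))
      exact hj.1 (.inr ⟨i, hik.symm hAdj hw, (hx.1 k i).trans hone⟩)
  have hi_eq : γ i - y i = t := by linarith [(abs_le.1 (ht.abs_le i hi)).2, ht.pos, hj.2]
  exact ⟨⟨hi, hi_eq⟩, hji, by linarith [hj.2]⟩

theorem Discrepant.load_eq_one (hy : StrictlyComplementary Adj w y x)
    (hγ : DualFeasible Adj w γ) (ht : 0 < t) (hj : Discrepant Adj w x y γ (-t) j) :
    load Adj x j = 1 :=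
  hy.load_eq_one j (by linarith [hγ.nonneg j, hj.2] : 0 < y j).ne'

theorem Discrepant.not_isolatedTightEdge (hAdj : ∀ i j, Adj i j → Adj j i)
    (hw : ∀ i j, w i j = w j i) (hx : LPFeasible Adj x) (hy : StrictlyComplementary Adj w y x)
    (hγ : DualFeasible Adj w γ) (ht : IsDiscrepancyBound Adj w x y γ t)
    (hi : Discrepant Adj w x y γ t i) : ¬ IsolatedTightEdge Adj w γ i j := by
  intro hij
  obtain ⟨hj, -⟩ := hi.of_tightEdge hAdj hw hx hy ht hij.tight
  have honly (k : V) (hjk : Adj j k) (hne : k ≠ i) : x j k = 0 := by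
    by_contra hsupp
    exact hne (hij.eq_left k (hj.of_support hAdj hw hx hy hγ ht hjk hsupp).2)
  have hone : x j i = 1 := by
    rw [← hj.load_eq_one hy hγ ht.pos]
    refine (sum_eq_single_of_mem i ?_ fun k hk hne => honly k (mem_filter.1 hk).2 hne).symm
    exact mem_filter.2 ⟨mem_univ i, hAdj i j hij.tight.1⟩
  exact hi.1 (.inr ⟨j, hij, (hx.1 i j).trans hone⟩)

theorem Discrepant.exists_two_half_edges (hAdj : ∀ i j, Adj i j → Adj j i)
    (hw : ∀ i j, w i j = w j i) (hx : IsUniqueOpt Adj w x)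
    (hy : StrictlyComplementary Adj w y x) (hγ : DualFeasible Adj w γ)
    (hsupp : TightlySupported Adj w γ) (ht : IsDiscrepancyBound Adj w x y γ t)
    (hi : Discrepant Adj w x y γ t i) :
    ∃ j k, j ≠ k ∧ TightEdge Adj w γ i j ∧ TightEdge Adj w γ i k ∧ x i j = 1 / 2 ∧
      x i k = 1 / 2 := by
  have hpos : 0 < γ i := by linarith [hy.nonneg i, hi.2, ht.pos]
  rcases hsupp i hpos.ne' with ⟨j, hij⟩ | ⟨j, k, hjk, hij, hik⟩
  · exact absurd hij (hi.not_isolatedTightEdge hAdj hw hx.feasible hy hγ ht)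
  · have hxij := (hi.of_tightEdge hAdj hw hx.feasible hy ht hij).2
    have hxik := (hi.of_tightEdge hAdj hw hx.feasible hy ht hik).2
    have hsum := hx.feasible.add_le_one hij.1 hik.1 hjk
    refine ⟨j, k, hjk, hij, hik, ?_⟩
    rcases hx.eq_zero_or_half_or_one hAdj hij.1 with h | h | h <;>
      rcases hx.eq_zero_or_half_or_one hAdj hik.1 with h' | h' | h'
    all_goals first | contradiction | exact ⟨h, h'⟩ | linarith

theorem Discrepant.of_support_of_pos (hAdj : ∀ i j, Adj i j → Adj j i)
    (hw : ∀ i j, w i j = w j i) (hx : IsUniqueOpt Adj w x)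
    (hy : StrictlyComplementary Adj w y x) (hγ : DualFeasible Adj w γ)
    (hsupp : TightlySupported Adj w γ) (ht : IsDiscrepancyBound Adj w x y γ t)
    (hi : Discrepant Adj w x y γ t i) {l : V} (hil : Adj i l) (hne : x i l ≠ 0) :
    Discrepant Adj w x y γ (-t) l := by
  classical
  obtain ⟨j, k, hjk, hij, hik, hxij, hxik⟩ :=
    hi.exists_two_half_edges hAdj hw hx hy hγ hsupp ht
  have hl : l = j ∨ l = k := by
    by_contra! h
    have hsum : ∑ m ∈ {l, j, k}, x i m ≤ 1 :=
      hx.feasible.sum_le_one (by simp [hil, hij.1, hik.1])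
    rw [sum_insert (by simp [h.1, h.2]), sum_pair hjk, hxij, hxik] at hsum
    linarith [(hx.feasible.2.1 i l hil).lt_of_ne' hne]
  rcases hl with rfl | rfl
  · exact (hi.of_tightEdge hAdj hw hx.feasible hy ht hij).1
  · exact (hi.of_tightEdge hAdj hw hx.feasible hy ht hik).1

theorem IsDiscrepancyBound.not_discrepant (hAdj : ∀ i j, Adj i j → Adj j i)
    (hw : ∀ i j, w i j = w j i) (hx : IsUniqueOpt Adj w x)
    (hy : StrictlyComplementary Adj w y x) (hγ : DualFeasible Adj w γ)
    (hsupp : TightlySupported Adj w γ) (ht : IsDiscrepancyBound Adj w x y γ t) (i : V) :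
    ¬ Discrepant Adj w x y γ t i := by
  intro hi
  have hdisj : Disjoint {k | Discrepant Adj w x y γ t k} {k | Discrepant Adj w x y γ (-t) k} :=
    Set.disjoint_left.2 fun k (hk : Discrepant Adj w x y γ t k) hk' => by
      linarith [hk.2, hk'.2, ht.pos]
  obtain ⟨j, -, -, hij, -, hhalf, -⟩ := hi.exists_two_half_edges hAdj hw hx hy hγ hsupp ht
  rcases hx.eq_zero_or_one_of_bipartite hAdj hdisj
    (fun k l hkl hne hk => hk.of_support_of_pos hAdj hw hx hy hγ hsupp ht hkl hne)
    (fun k l hkl hne hk => (hk.of_support hAdj hw hx.feasible hy hγ ht hkl hne).1)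
    hij.1 hi with h | h <;> linarith

theorem reconciled_of_tightlySupported (hAdj : ∀ i j, Adj i j → Adj j i)
    (hw : ∀ i j, w i j = w j i) (hx : IsUniqueOpt Adj w x)
    (hy : StrictlyComplementary Adj w y x) (hγ : DualFeasible Adj w γ)
    (hsupp : TightlySupported Adj w γ) (i : V) : Reconciled Adj w x y γ i := by
  classical
  by_contra hi
  obtain ⟨m, hm, hmax⟩ := exists_max_image {k | ¬ Reconciled Adj w x y γ k} (fun k => |γ k - y k|)
    ⟨i, by simpa using hi⟩
  simp only [mem_filter, mem_univ, true_and] at hm hmax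
  have ht : IsDiscrepancyBound Adj w x y γ |γ m - y m| :=
    ⟨abs_pos.2 fun h => hm (.inl (sub_eq_zero.1 h)), hmax⟩
  have hnone := ht.not_discrepant hAdj hw hx hy hγ hsupp
  rcases eq_or_eq_neg_of_abs_eq (rfl : |γ m - y m| = _) with h | h
  · exact hnone m ⟨hm, h⟩
  · have hm_neg : Discrepant Adj w x y γ (-|γ m - y m|) m := ⟨hm, h⟩
    obtain ⟨k, hk, hne⟩ : ∃ k ∈ ({k | Adj m k} : Finset V), x m k ≠ 0 :=
      exists_ne_zero_of_sum_ne_zero <| by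
        rw [← load, hm_neg.load_eq_one hy hγ ht.pos]
        exact one_ne_zero
    exact hnone k
      (hm_neg.of_support hAdj hw hx.feasible hy hγ ht (mem_filter.1 hk).2 hne).1

theorem complementarySlack_of_reconciled (hAdj : ∀ i j, Adj i j → Adj j i)
    (hw : ∀ i j, w i j = w j i) (hx : LPFeasible Adj x) (hy : ComplementarySlack Adj w y x)
    (hrec : ∀ i, Reconciled Adj w x y γ i) : ComplementarySlack Adj w γ x := by
  have htight {i j : V} (hij : Adj i j) (hne : x i j ≠ 0)
      (h : ∃ k, IsolatedTightEdge Adj w γ i k ∧ x i k = 1) : TightEdge Adj w γ i j := by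
    obtain ⟨k, hik, hone⟩ := h
    obtain rfl : k = j := by
      by_contra hkj
      exact hne (hx.eq_zero_of_eq_one hik.tight.1 hij hkj hone)
    exact hik.tight
  refine ⟨fun i hi => ?_, fun i j hij hne => ?_⟩
  · rcases hrec i with heq | ⟨j, hij, hone⟩
    · exact hy.load_eq_one i (heq ▸ hi)
    · exact hx.load_eq_one_of_eq_one hij.tight.1 hone
  · rcases hrec i with hi | hi
    · rcases hrec j with hj | hj
      · rw [hi, hj, hy.add_eq_weight i j hij hne]
      · exact ((htight (hAdj i j hij) (hx.1 i j ▸ hne) hj).symm hAdj hw).2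
    · exact (htight hij hne hi).2

theorem sum_eq_LPobj_of_tightlySupported (hAdj : ∀ i j, Adj i j → Adj j i)
    (hw : ∀ i j, w i j = w j i) (hx : IsUniqueOpt Adj w x) (hγ : DualFeasible Adj w γ)
    (hsupp : TightlySupported Adj w γ) : ∑ i, γ i = LPobj Adj w x := by
  obtain ⟨y, hy⟩ := hx.exists_strictlyComplementary hAdj hw
  rw [hγ.sum_eq_LPobj_iff hAdj hx.feasible]
  exact complementarySlack_of_reconciled hAdj hw hx.feasible hy.toComplementarySlack
    (reconciled_of_tightlySupported hAdj hw hx hy hγ hsupp)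

end TightEdges

section FixedPoints

theorem exists_fold_max_eq_of_lt {ι β : Type*} [LinearOrder β] {s : Finset ι} {b : β} {f : ι → β}
    (h : b < s.fold max b f) : ∃ k ∈ s, f k = s.fold max b f := by
  obtain hle | ⟨k, hk, hle⟩ := (le_fold_max _).1 (le_refl (s.fold max b f))
  · exact absurd hle h.not_ge
  · exact ⟨k, hk, ((le_fold_max _).2 (.inr ⟨k, hk, le_rfl⟩)).antisymm hle⟩

variable {V : Type*} {w α : V → V → ℝ} {i j k : V}

theorem offer_of_add_le (hw : ∀ i j, w i j = w j i) (hα : 0 ≤ α i j)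
    (hle : α i j + α j i ≤ w i j) : offer w α j i = (w i j + α i j - α j i) / 2 := by
  rw [offer, hw j i, max_eq_left (by linarith), max_eq_left (by linarith)]
  ring

theorem offer_of_lt_add (hw : ∀ i j, w i j = w j i) (hlt : w i j < α i j + α j i) :
    offer w α j i = max (w i j - α j i) 0 := by
  rw [offer, hw j i, max_eq_right (a := w i j - α j i - α i j) (by linarith)]
  ring

variable [Fintype V] {Adj : V → V → Prop} [DecidableRel Adj] {κ : ℝ}

theorem earn_nonneg (i : V) : 0 ≤ earn Adj w α i :=
  (le_fold_max _).2 (.inl le_rfl)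

theorem exists_offer_eq_earn (h : earn Adj w α i ≠ 0) :
    ∃ j, Adj i j ∧ offer w α j i = earn Adj w α i := by
  obtain ⟨j, hj, heq⟩ := exists_fold_max_eq_of_lt ((earn_nonneg i).lt_of_ne' h)
  exact ⟨j, (mem_filter.1 hj).2, heq⟩

variable [DecidableEq V]

theorem bestAlt_nonneg (i j : V) : 0 ≤ bestAlt Adj w α i j :=
  (le_fold_max _).2 (.inl le_rfl)

theorem offer_le_bestAlt (hik : Adj i k) (hkj : k ≠ j) : offer w α k i ≤ bestAlt Adj w α i j :=
  (le_fold_max _).2 (.inr ⟨k, by simp [hik, hkj], le_rfl⟩)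

theorem exists_offer_eq_bestAlt (h : bestAlt Adj w α i j ≠ 0) :
    ∃ k, Adj i k ∧ k ≠ j ∧ offer w α k i = bestAlt Adj w α i j := by
  obtain ⟨k, hk, heq⟩ := exists_fold_max_eq_of_lt ((bestAlt_nonneg i j).lt_of_ne' h)
  obtain ⟨hik, hkj⟩ := (mem_filter.1 hk).2
  exact ⟨k, hik, hkj, heq⟩

theorem earn_eq_max (hij : Adj i j) :
    earn Adj w α i = max (offer w α j i) (bestAlt Adj w α i j) := by
  have hinsert : ({k | Adj i k} : Finset V) = insert j ({k | Adj i k ∧ k ≠ j} : Finset V) := by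
    ext k
    by_cases hk : k = j <;> simp [hk, hij]
  rw [earn, hinsert, fold_insert (by simp)]
  rfl

theorem IsFixedPoint.bestAlt_eq (h : IsFixedPoint Adj w κ α) (hκ : κ ≠ 0) (hij : Adj i j) :
    bestAlt Adj w α i j = α i j := by
  have := h i j hij
  rw [step] at this
  exact mul_left_cancel₀ hκ (by linarith)

theorem IsFixedPoint.msg_nonneg (h : IsFixedPoint Adj w κ α) (hκ : κ ≠ 0) (hij : Adj i j) :
    0 ≤ α i j :=
  h.bestAlt_eq hκ hij ▸ bestAlt_nonneg i j

theorem IsFixedPoint.earn_of_add_le (h : IsFixedPoint Adj w κ α) (hκ : κ ≠ 0)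
    (hw : ∀ i j, w i j = w j i) (hij : Adj i j) (hle : α i j + α j i ≤ w i j) :
    earn Adj w α i = (w i j + α i j - α j i) / 2 := by
  rw [earn_eq_max hij, h.bestAlt_eq hκ hij, offer_of_add_le hw (h.msg_nonneg hκ hij) hle]
  exact max_eq_left (by linarith)

theorem IsFixedPoint.earn_of_lt_add (h : IsFixedPoint Adj w κ α) (hκ : κ ≠ 0)
    (hw : ∀ i j, w i j = w j i) (hij : Adj i j) (hlt : w i j < α i j + α j i) :
    earn Adj w α i = α i j := by
  rw [earn_eq_max hij, h.bestAlt_eq hκ hij, offer_of_lt_add hw hlt]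
  exact max_eq_right (max_le (by linarith) (h.msg_nonneg hκ hij))

theorem IsFixedPoint.earn_add_earn (h : IsFixedPoint Adj w κ α) (hκ : κ ≠ 0)
    (hAdj : ∀ i j, Adj i j → Adj j i) (hw : ∀ i j, w i j = w j i) (hij : Adj i j) :
    earn Adj w α i + earn Adj w α j = max (w i j) (α i j + α j i) := by
  have hji := hAdj i j hij
  rcases le_or_gt (α i j + α j i) (w i j) with hle | hlt
  · rw [h.earn_of_add_le hκ hw hij hle, h.earn_of_add_le hκ hw hji (by rwa [add_comm, hw j i]),
      hw j i, max_eq_left hle]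
    ring
  · rw [h.earn_of_lt_add hκ hw hij hlt, h.earn_of_lt_add hκ hw hji (by rwa [add_comm, hw j i]),
      max_eq_right hlt.le]

theorem IsFixedPoint.dualFeasible_earn (h : IsFixedPoint Adj w κ α) (hκ : κ ≠ 0)
    (hAdj : ∀ i j, Adj i j → Adj j i) (hw : ∀ i j, w i j = w j i) :
    DualFeasible Adj w (earn Adj w α) :=
  ⟨earn_nonneg, fun _ _ hij => h.earn_add_earn hκ hAdj hw hij ▸ le_max_left _ _⟩

theorem IsFixedPoint.tightEdge_iff (h : IsFixedPoint Adj w κ α) (hκ : κ ≠ 0)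
    (hAdj : ∀ i j, Adj i j → Adj j i) (hw : ∀ i j, w i j = w j i) (hij : Adj i j) :
    TightEdge Adj w (earn Adj w α) i j ↔ α i j + α j i ≤ w i j := by
  rw [TightEdge, h.earn_add_earn hκ hAdj hw hij, max_eq_left_iff, and_iff_right hij]

theorem IsFixedPoint.offer_eq_earn_of_tightEdge (h : IsFixedPoint Adj w κ α) (hκ : κ ≠ 0)
    (hAdj : ∀ i j, Adj i j → Adj j i) (hw : ∀ i j, w i j = w j i)
    (hij : TightEdge Adj w (earn Adj w α) i j) : offer w α j i = earn Adj w α i := by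
  have hle := (h.tightEdge_iff hκ hAdj hw hij.1).1 hij
  rw [offer_of_add_le hw (h.msg_nonneg hκ hij.1) hle, h.earn_of_add_le hκ hw hij.1 hle]

theorem IsFixedPoint.tightEdge_of_offer_eq_earn (h : IsFixedPoint Adj w κ α) (hκ : κ ≠ 0)
    (hAdj : ∀ i j, Adj i j → Adj j i) (hw : ∀ i j, w i j = w j i) (hij : Adj i j)
    (hoffer : offer w α j i = earn Adj w α i) (hne : earn Adj w α i ≠ 0) :
    TightEdge Adj w (earn Adj w α) i j := by
  rw [h.tightEdge_iff hκ hAdj hw hij]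
  by_contra! hlt
  rw [offer_of_lt_add hw hlt, h.earn_of_lt_add hκ hw hij hlt] at hoffer
  rw [h.earn_of_lt_add hκ hw hij hlt] at hne
  rcases max_choice (w i j - α j i) 0 with hmax | hmax
  · linarith
  · exact hne (hoffer.symm.trans hmax)

theorem IsFixedPoint.eq_of_tightEdge_of_add_lt (h : IsFixedPoint Adj w κ α) (hκ : κ ≠ 0)
    (hAdj : ∀ i j, Adj i j → Adj j i) (hw : ∀ i j, w i j = w j i) (hij : Adj i j)
    (hlt : α i j + α j i < w i j) (hik : TightEdge Adj w (earn Adj w α) i k) : k = j := by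
  by_contra hkj
  have hoffer : offer w α k i ≤ α i j := h.bestAlt_eq hκ hij ▸ offer_le_bestAlt hik.1 hkj
  rw [h.offer_eq_earn_of_tightEdge hκ hAdj hw hik, h.earn_of_add_le hκ hw hij hlt.le] at hoffer
  linarith

theorem IsFixedPoint.isolatedTightEdge_of_add_lt (h : IsFixedPoint Adj w κ α) (hκ : κ ≠ 0)
    (hAdj : ∀ i j, Adj i j → Adj j i) (hw : ∀ i j, w i j = w j i) (hij : Adj i j)
    (hlt : α i j + α j i < w i j) : IsolatedTightEdge Adj w (earn Adj w α) i j where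
  tight := (h.tightEdge_iff hκ hAdj hw hij).2 hlt.le
  eq_right _ := h.eq_of_tightEdge_of_add_lt hκ hAdj hw hij hlt
  eq_left _ := h.eq_of_tightEdge_of_add_lt hκ hAdj hw (hAdj i j hij) (by rwa [add_comm, hw j i])

theorem IsFixedPoint.tightlySupported_earn (h : IsFixedPoint Adj w κ α) (hκ : κ ≠ 0)
    (hAdj : ∀ i j, Adj i j → Adj j i) (hw : ∀ i j, w i j = w j i) :
    TightlySupported Adj w (earn Adj w α) := by
  intro i hi
  obtain ⟨j, hij, hj⟩ := exists_offer_eq_earn hi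
  have htight := h.tightEdge_of_offer_eq_earn hκ hAdj hw hij hj hi
  have hle := (h.tightEdge_iff hκ hAdj hw hij).1 htight
  rcases hle.lt_or_eq with hlt | heq
  · exact .inl ⟨j, h.isolatedTightEdge_of_add_lt hκ hAdj hw hij hlt⟩
  · have hbest : bestAlt Adj w α i j = earn Adj w α i := by
      rw [h.bestAlt_eq hκ hij, h.earn_of_add_le hκ hw hij hle]
      linarith
    obtain ⟨k, hik, hkj, hk⟩ := exists_offer_eq_bestAlt (hbest.trans_ne hi)
    exact .inr ⟨j, k, hkj.symm, htight,
      h.tightEdge_of_offer_eq_earn hκ hAdj hw hik (hk.trans hbest) hi⟩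

end FixedPoints

theorem stmt16_general {V : Type*} [Fintype V] [DecidableEq V]
    {Adj : V → V → Prop} [DecidableRel Adj] {w : V → V → ℝ}
    (hAdj : ∀ i j, Adj i j → Adj j i) (hw : ∀ i j, w i j = w j i) {κ : ℝ} (hκ : κ ≠ 0)
    {xstar : V → V → ℝ} (hopt : IsUniqueOpt Adj w xstar)
    {α : V → V → ℝ} (hfp : IsFixedPoint Adj w κ α) :
    (∀ i, 0 ≤ earn Adj w α i) ∧
    (∀ i j, Adj i j → w i j ≤ earn Adj w α i + earn Adj w α j) ∧
    (∑ i, earn Adj w α i = LPobj Adj w xstar) ∧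
    (∀ y : V → ℝ, (∀ i, 0 ≤ y i) → (∀ i j, Adj i j → w i j ≤ y i + y j) →
      ∑ i, earn Adj w α i ≤ ∑ i, y i) := by
  have hfeas : DualFeasible Adj w (earn Adj w α) := hfp.dualFeasible_earn hκ hAdj hw
  have hvalue : ∑ i, earn Adj w α i = LPobj Adj w xstar :=
    sum_eq_LPobj_of_tightlySupported hAdj hw hopt hfeas
      (hfp.tightlySupported_earn hκ hAdj hw)
  exact ⟨hfeas.nonneg, hfeas.cover, hvalue, fun y hy_nonneg hy_cover =>
    hvalue.trans_le (DualFeasible.LPobj_le_sum hAdj ⟨hy_nonneg, hy_cover⟩ hopt.feasible)⟩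

/-- If the LP relaxation is pointed, then at any fixed point of the natural dynamics the
earnings vector `γ` is an optimal solution of the dual LP: it is dual feasible, its value
equals `∑_e w_e x*_e`, and it minimizes the dual objective. -/
theorem stmt16 {V : Type*} [Fintype V] [DecidableEq V]
    (Adj : V → V → Prop) [DecidableRel Adj] (w : V → V → ℝ)
    (hG : GoodGraph Adj w) (κ : ℝ) (hκ : κ ∈ Set.Ioo (0 : ℝ) 1)
    (xstar : V → V → ℝ) (hfeas : LPFeasible Adj xstar)
    (hhalf : ∀ i j, Adj i j → xstar i j = 0 ∨ xstar i j = 1 / 2 ∨ xstar i j = 1)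
    (ε : ℝ) (hε : 0 < ε)
    (hopt : ∀ x, LPFeasible Adj x → LPobj Adj w x ≤ LPobj Adj w xstar)
    (hgap : ∀ x, LPFeasible Adj x →
      (∀ i j, Adj i j → x i j = 0 ∨ x i j = 1 / 2 ∨ x i j = 1) →
      (∃ i j, Adj i j ∧ x i j ≠ xstar i j) →
      LPobj Adj w x + ε ≤ LPobj Adj w xstar)
    (α : V → V → ℝ) (hnn : ∀ i j, Adj i j → 0 ≤ α i j)
    (hfp : IsFixedPoint Adj w κ α) :
    (∀ i, 0 ≤ earn Adj w α i) ∧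
    (∀ i j, Adj i j → w i j ≤ earn Adj w α i + earn Adj w α j) ∧
    (∑ i, earn Adj w α i = LPobj Adj w xstar) ∧
    (∀ y : V → ℝ, (∀ i, 0 ≤ y i) → (∀ i j, Adj i j → w i j ≤ y i + y j) →
      ∑ i, earn Adj w α i ≤ ∑ i, y i) :=
  stmt16_general hG.1 hG.2.2.1 hκ.1.ne' (.of_halfIntegral hG.1 hfeas fun z hz hz_half hz_ne =>
    (lt_add_of_pos_right _ hε).trans_le (hgap z hz hz_half hz_ne)) hfp
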